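/- Assume that X is uniformly perfect at a for radii ≥ 1 with constant κ, that μ is doubling, and that for some q > 0 the measure μ̂_q is doubling on (X̂, d̂). Then there exist 0 < s < q and C_s > 0 such that μ(B(a,r))/μ(B(a,R)) ≥ C_s (r/R)^s whenever 1 ≤ r ≤ R < ∞. -/

import Mathlib

/-!
Write `N t = μ {1 + |x| < t}`, let `T t` be the `μ̂_q`-mass of `{1 + |x| ≥ t}`, and set
`G t = N t + t ^ q * T t`, which is the integral of `min 1 ((t / (1 + |x|)) ^ q)`. A ball of radius
`d̂(x, ∞) / 2` centred at `x ∈ X` lies in an annulus on which `1 + |y|` is comparable to `1 + |x|`,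
while the ball of eight times that radius contains a neighbourhood of `∞`. Doubling of `μ̂_q` and
uniform perfectness therefore give `t ^ q * T t ≤ C * N t`, so that `G` is comparable to `N`. Always
`G (2 * t) ≤ N t + 2 ^ q * t ^ q * T t`, and since `N t` carries a fixed proportion of `G t`, the
right-hand side is at most `2 ^ s * G t` for some `s < q`. Iterating gives
`N R ≤ K * (R / r) ^ s * N r`.
-/

open Metric Set MeasureTheory Filter
open scoped ENNReal NNReal

noncomputable section

variable {X : Type*}

/-- The quasimetric `d_a` on the sphericalization `X̂ = X ∪ {∞}`, with `none` playing
the role of the point `∞`. -/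
noncomputable def sphDist [MetricSpace X] (a : X) : Option X → Option X → ℝ
  | some x, some y => dist x y / ((1 + dist x a) * (1 + dist y a))
  | some x, none => 1 / (1 + dist x a)
  | none, some y => 1 / (1 + dist y a)
  | none, none => 0

/-- The sum `Σ_{j=1}^k d_a(x_{j-1}, x_j)` along a finite sequence (list) in `X̂`. -/
noncomputable def chainSum [MetricSpace X] (a : X) : List (Option X) → ℝ
  | [] => 0
  | [_] => 0
  | x :: y :: l => sphDist a x y + chainSum a (y :: l)

/-- The sphericalized distance `d̂(x,y) = inf Σ_{j=1}^k d_a(x_{j-1},x_j)`, the infimum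
being taken over all finite sequences `x = x_0, x_1, …, x_k = y` in `X̂`. -/
noncomputable def sphHatDist [MetricSpace X] (a : X) (x y : Option X) : ℝ :=
  sInf {s : ℝ | ∃ L : List (Option X),
    L.head? = some x ∧ L.getLast? = some y ∧ chainSum a L = s}

/-- `d̂(x) = d̂(x,∞) = 1/(1+|x|)` for `x ∈ X`. -/
noncomputable def sphD [MetricSpace X] (a x : X) : ℝ := 1 / (1 + dist x a)

/-- `d̂(x) = d̂(x,∞)` on all of `X̂`, with the convention `d̂(∞) = 0`. -/
noncomputable def sphDhat [MetricSpace X] (a : X) : Option X → ℝ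
  | none => 0
  | some x => sphD a x

/-- The sphericalized measure `μ̂_q` on `X̂`: `dμ̂_q(x) = (1+|x|)^{-q} dμ(x)` on `X`,
and `μ̂_q({∞}) = 0`.  Here `sphMeas a q μ S` is the value `μ̂_q(S)` for `S ⊆ X̂`. -/
noncomputable def sphMeas [MetricSpace X] [MeasurableSpace X] (a : X) (q : ℝ)
    (μ : Measure X) (S : Set (Option X)) : ℝ≥0∞ :=
  ∫⁻ x in (Option.some ⁻¹' S), ENNReal.ofReal (((1 + dist x a) ^ q)⁻¹) ∂μ

section SublevelGrowth

variable {α : Type*} [MeasurableSpace α] {μ : Measure α} {g : α → ℝ} {q C t u : ℝ}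

/-- The mass that the weighted measure `g ^ (-q) dμ` gives to the superlevel set `{t ≤ g}`. With
`g x = 1 + |x|` it is the `μ̂_q`-mass of a neighbourhood of `∞`. -/
def tailMass (μ : Measure α) (g : α → ℝ) (q t : ℝ) : ℝ≥0∞ :=
  ∫⁻ x in {x | t ≤ g x}, ENNReal.ofReal ((g x ^ q)⁻¹) ∂μ

/-- The integral of the truncated weight `min 1 ((t / g) ^ q)`, written as the sum of its parts
over `{g < t}` and `{t ≤ g}`. It is the quantity whose growth in `t` is controlled. -/
def truncatedMass (μ : Measure α) (g : α → ℝ) (q t : ℝ) : ℝ≥0∞ :=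
  μ {x | g x < t} + ENNReal.ofReal (t ^ q) * tailMass μ g q t

theorem tailMass_antitone : Antitone (tailMass μ g q) := fun _ _ htu =>
  lintegral_mono_set fun _ hx => htu.trans hx

theorem measurableSet_le_and_lt (hg : Measurable g) (t u : ℝ) :
    MeasurableSet {x | t ≤ g x ∧ g x < u} :=
  (measurableSet_le measurable_const hg).inter (measurableSet_lt hg measurable_const)

theorem setLIntegral_add_tailMass (hg : Measurable g) (htu : t ≤ u) :
    ∫⁻ x in {x | t ≤ g x ∧ g x < u}, ENNReal.ofReal ((g x ^ q)⁻¹) ∂μ + tailMass μ g q u =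
      tailMass μ g q t := by
  have hdisj : Disjoint {x | t ≤ g x ∧ g x < u} {x | u ≤ g x} :=
    disjoint_left.2 fun x hx hux => hx.2.not_ge hux
  have hunion : {x | t ≤ g x ∧ g x < u} ∪ {x | u ≤ g x} = {x | t ≤ g x} := by
    ext x
    exact ⟨fun h => h.elim And.left htu.trans, fun h => (lt_or_ge (g x) u).imp (⟨h, ·⟩) id⟩
  rw [tailMass, tailMass, ← hunion, lintegral_union (measurableSet_le measurable_const hg) hdisj]

theorem measure_le_rpow_mul_setLIntegral (hg : Measurable g) (hq : 0 ≤ q) (ht : 0 < t)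
    (htu : t ≤ u) :
    μ {x | t ≤ g x ∧ g x < u} ≤ ENNReal.ofReal (u ^ q) *
      ∫⁻ x in {x | t ≤ g x ∧ g x < u}, ENNReal.ofReal ((g x ^ q)⁻¹) ∂μ := by
  have hu : 0 < u := ht.trans_le htu
  calc μ {x | t ≤ g x ∧ g x < u}
      = ENNReal.ofReal (u ^ q) *
          ∫⁻ _ in {x | t ≤ g x ∧ g x < u}, ENNReal.ofReal ((u ^ q)⁻¹) ∂μ := by
        rw [setLIntegral_const, ← mul_assoc, ← ENNReal.ofReal_mul (by positivity),
          mul_inv_cancel₀ (by positivity), ENNReal.ofReal_one, one_mul]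
    _ ≤ _ := by
        gcongr ENNReal.ofReal (u ^ q) * ?_
        refine setLIntegral_mono' (measurableSet_le_and_lt hg t u) fun x ⟨htx, hxu⟩ => ?_
        have hx : 0 < g x := ht.trans_le htx
        gcongr

theorem truncatedMass_le (hg : Measurable g) (hq : 0 ≤ q) (ht : 0 < t) (htu : t ≤ u) :
    truncatedMass μ g q u ≤ μ {x | g x < t} + ENNReal.ofReal (u ^ q) * tailMass μ g q t := by
  set shell := {x | t ≤ g x ∧ g x < u}
  have hsplit : μ {x | g x < u} ≤ μ {x | g x < t} + μ shell :=
    (measure_mono fun x hx => (lt_or_ge (g x) t).imp id fun h => ⟨h, hx⟩).trans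
      (measure_union_le _ _)
  calc truncatedMass μ g q u
      ≤ μ {x | g x < t} + μ shell + ENNReal.ofReal (u ^ q) * tailMass μ g q u := by
        rw [truncatedMass]
        gcongr
    _ ≤ μ {x | g x < t} + ENNReal.ofReal (u ^ q) *
          ∫⁻ x in shell, ENNReal.ofReal ((g x ^ q)⁻¹) ∂μ +
          ENNReal.ofReal (u ^ q) * tailMass μ g q u := by
        gcongr
        exact measure_le_rpow_mul_setLIntegral hg hq ht htu
    _ = μ {x | g x < t} + ENNReal.ofReal (u ^ q) * tailMass μ g q t := by
        rw [add_assoc, ← mul_add, setLIntegral_add_tailMass hg htu]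

theorem exists_rpow_eq_weighted_mean (hq : 0 < q) (hC : 0 < C) :
    ∃ s, 0 < s ∧ s < q ∧ (1 + C) * (2 : ℝ) ^ s = 1 + C * 2 ^ q := by
  have h2q : 1 < (2 : ℝ) ^ q := Real.one_lt_rpow one_lt_two hq
  have hmean_gt : 1 < (1 + C * 2 ^ q) / (1 + C) := by
    rw [one_lt_div (by positivity)]
    nlinarith
  have hmean_lt : (1 + C * 2 ^ q) / (1 + C) < 2 ^ q := by
    rw [div_lt_iff₀ (by positivity)]
    nlinarith
  refine ⟨Real.logb 2 ((1 + C * 2 ^ q) / (1 + C)), Real.logb_pos one_lt_two hmean_gt,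
    (Real.logb_lt_iff_lt_rpow one_lt_two (by positivity)).2 hmean_lt, ?_⟩
  rw [Real.rpow_logb two_pos (by norm_num) (by positivity), mul_div_cancel₀ _ (by positivity)]

theorem add_mul_le_mul_add_of_weighted_mean {x y : ℝ≥0∞} {l m : ℝ} (hC : 0 ≤ C) (hl : 0 ≤ l)
    (hlm : l ≤ m) (hmean : (1 + C) * l = 1 + C * m) (hyx : y ≤ ENNReal.ofReal C * x) :
    x + ENNReal.ofReal m * y ≤ ENNReal.ofReal l * (x + y) := by
  have hgap : 0 ≤ m - l := sub_nonneg.2 hlm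
  calc x + ENNReal.ofReal m * y
      = x + ENNReal.ofReal (m - l) * y + ENNReal.ofReal l * y := by
        rw [add_assoc, ← add_mul, ← ENNReal.ofReal_add hgap hl, sub_add_cancel]
    _ ≤ x + ENNReal.ofReal (m - l) * (ENNReal.ofReal C * x) + ENNReal.ofReal l * y := by gcongr
    _ = ENNReal.ofReal (1 + (m - l) * C) * x + ENNReal.ofReal l * y := by
        rw [ENNReal.ofReal_add zero_le_one (by positivity), ENNReal.ofReal_mul hgap,
          ENNReal.ofReal_one]
        ring
    _ = ENNReal.ofReal l * (x + y) := by
        rw [show 1 + (m - l) * C = l by linarith, mul_add]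

theorem truncatedMass_two_mul_le {s : ℝ} (hg : Measurable g) (hq : 0 ≤ q) (hC : 0 ≤ C)
    (hsq : s ≤ q) (hmean : (1 + C) * (2 : ℝ) ^ s = 1 + C * 2 ^ q) (ht : 0 < t)
    (htail : ENNReal.ofReal (t ^ q) * tailMass μ g q t ≤ ENNReal.ofReal C * μ {x | g x < t}) :
    truncatedMass μ g q (2 * t) ≤ ENNReal.ofReal (2 ^ s) * truncatedMass μ g q t := by
  refine (truncatedMass_le hg hq ht (by linarith)).trans ?_
  rw [Real.mul_rpow zero_le_two ht.le, ENNReal.ofReal_mul (by positivity), mul_assoc]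
  exact add_mul_le_mul_add_of_weighted_mean hC (by positivity)
    (Real.rpow_le_rpow_of_exponent_le one_le_two hsq) hmean htail

theorem le_ofReal_pow_mul_of_two_mul_le {f : ℝ → ℝ≥0∞} {t₀ l : ℝ} (hl : 0 ≤ l) (ht₀ : 0 ≤ t₀)
    (hf : ∀ t, t₀ ≤ t → f (2 * t) ≤ ENNReal.ofReal l * f t) (ht : t₀ ≤ t) (n : ℕ) :
    f (2 ^ n * t) ≤ ENNReal.ofReal (l ^ n) * f t := by
  induction n with
  | zero => simp
  | succ n ih =>
    have hscaled : t₀ ≤ 2 ^ n * t :=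
      ht.trans (le_mul_of_one_le_left (ht₀.trans ht) (one_le_pow₀ one_le_two))
    rw [pow_succ', mul_assoc, pow_succ', ENNReal.ofReal_mul hl, mul_assoc]
    exact (hf _ hscaled).trans (by gcongr)

theorem exists_measure_sublevel_le_rpow {t₀ : ℝ} (hg : Measurable g) (hq : 0 < q) (hC : 0 < C)
    (ht₀ : 0 < t₀)
    (htail : ∀ t, t₀ ≤ t →
      ENNReal.ofReal (t ^ q) * tailMass μ g q t ≤ ENNReal.ofReal C * μ {x | g x < t}) :
    ∃ s K : ℝ, 0 < s ∧ s < q ∧ 0 < K ∧ ∀ r R, t₀ ≤ r → r ≤ R →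
      μ {x | g x < R} ≤ ENNReal.ofReal (K * (R / r) ^ s) * μ {x | g x < r} := by
  obtain ⟨s, hs, hsq, hmean⟩ := exists_rpow_eq_weighted_mean hq hC
  refine ⟨s, 2 ^ s * (1 + C), hs, hsq, by positivity, fun r R hr hrR => ?_⟩
  have hr0 : 0 < r := ht₀.trans_le hr
  have hR0 : 0 < R := hr0.trans_le hrR
  obtain ⟨n, hnle, hltn⟩ := exists_nat_pow_near ((one_le_div hr0).2 hrR) one_lt_two
  rw [div_lt_iff₀ hr0] at hltn
  have hpow : ((2 : ℝ) ^ s) ^ (n + 1) ≤ 2 ^ s * (R / r) ^ s := by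
    rw [pow_succ', Real.rpow_pow_comm zero_le_two]
    gcongr
  calc μ {x | g x < R}
      ≤ μ {x | g x < 2 ^ (n + 1) * r} := measure_mono fun x hx => lt_trans hx hltn
    _ ≤ truncatedMass μ g q (2 ^ (n + 1) * r) := le_self_add
    _ ≤ ENNReal.ofReal (((2 : ℝ) ^ s) ^ (n + 1)) * truncatedMass μ g q r :=
        le_ofReal_pow_mul_of_two_mul_le (by positivity) ht₀.le (fun t ht =>
          truncatedMass_two_mul_le hg hq.le hC.le hsq.le hmean (ht₀.trans_le ht) (htail t ht)) hr _
    _ ≤ ENNReal.ofReal (2 ^ s * (R / r) ^ s) *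
          (μ {x | g x < r} + ENNReal.ofReal C * μ {x | g x < r}) := by
        exact mul_le_mul' (ENNReal.ofReal_le_ofReal hpow) (add_le_add_right (htail r hr) _)
    _ = ENNReal.ofReal (2 ^ s * (1 + C) * (R / r) ^ s) * μ {x | g x < r} := by
        rw [← one_add_mul, ← ENNReal.ofReal_one, ← ENNReal.ofReal_add zero_le_one hC.le,
          ← mul_assoc, ← ENNReal.ofReal_mul (by positivity), mul_right_comm]

end SublevelGrowth

section Sphericalization

variable [MetricSpace X] {a : X}

theorem abs_sphDhat_sub_le_sphDist (a : X) (x y : Option X) :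
    |sphDhat a x - sphDhat a y| ≤ sphDist a x y := by
  rcases x with _ | x <;> rcases y with _ | y
  · simp [sphDhat, sphDist]
  · have hy : 0 < 1 + dist y a := by positivity
    simp [sphDhat, sphDist, sphD, abs_of_pos hy]
  · have hx : 0 < 1 + dist x a := by positivity
    simp [sphDhat, sphDist, sphD, abs_of_pos hx]
  · have hx : 0 < 1 + dist x a := by positivity
    have hy : 0 < 1 + dist y a := by positivity
    simp only [sphDhat, sphDist, sphD]
    rw [div_sub_div _ _ hx.ne' hy.ne', abs_div, abs_of_pos (mul_pos hx hy)]
    gcongr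
    calc |1 * (1 + dist y a) - (1 + dist x a) * 1| = |dist y a - dist x a| := by ring_nf
      _ ≤ dist y x := abs_dist_sub_le y x a
      _ = dist x y := dist_comm y x

theorem abs_sphDhat_sub_le_chainSum {L : List (Option X)} {x y : Option X}
    (hx : L.head? = some x) (hy : L.getLast? = some y) :
    |sphDhat a x - sphDhat a y| ≤ chainSum a L := by
  induction L generalizing x with
  | nil => simp at hx
  | cons u l ih =>
    obtain rfl : u = x := by simpa using hx
    cases l with
    | nil =>
      obtain rfl : u = y := by simpa using hy
      simp [chainSum]
    | cons v l =>
      calc |sphDhat a u - sphDhat a y|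
          ≤ |sphDhat a u - sphDhat a v| + |sphDhat a v - sphDhat a y| := abs_sub_le _ _ _
        _ ≤ sphDist a u v + chainSum a (v :: l) :=
            add_le_add (abs_sphDhat_sub_le_sphDist a u v) (ih rfl (by simpa using hy))

theorem abs_sphDhat_sub_le_sphHatDist (x y : Option X) :
    |sphDhat a x - sphDhat a y| ≤ sphHatDist a x y := by
  refine le_csInf ⟨_, [x, y], rfl, rfl, rfl⟩ ?_
  rintro _ ⟨L, hx, hy, rfl⟩
  exact abs_sphDhat_sub_le_chainSum hx hy

theorem sphHatDist_le_chainSum {L : List (Option X)} {x y : Option X}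
    (hx : L.head? = some x) (hy : L.getLast? = some y) : sphHatDist a x y ≤ chainSum a L := by
  refine csInf_le ⟨0, ?_⟩ ⟨L, hx, hy, rfl⟩
  rintro _ ⟨L', hx', hy', rfl⟩
  exact (abs_nonneg _).trans (abs_sphDhat_sub_le_chainSum hx' hy')

theorem sphHatDist_some_some_le (x y : X) :
    sphHatDist a (some x) (some y) ≤ sphD a x + sphD a y := by
  simpa [chainSum, sphDist, sphD] using
    sphHatDist_le_chainSum (a := a) (L := [some x, none, some y]) rfl rfl

theorem ball_eq_setOf_one_add_dist_lt (a : X) (r : ℝ) :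
    ball a r = {y | 1 + dist y a < 1 + r} := by
  ext y
  simp

theorem sphD_pos (a x : X) : 0 < sphD a x := by
  rw [sphD]
  positivity

theorem sphHatDist_lt_four_mul_sphD {x y : X} (h : (1 + dist x a) / 2 ≤ 1 + dist y a) :
    sphHatDist a (some x) (some y) < 4 * sphD a x := by
  have hy : sphD a y ≤ 2 * sphD a x := by
    calc 1 / (1 + dist y a) ≤ 1 / ((1 + dist x a) / 2) :=
          one_div_le_one_div_of_le (by positivity) h
      _ = 2 * (1 / (1 + dist x a)) := by field_simp
  linarith [sphHatDist_some_some_le (a := a) x y, sphD_pos a x]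

theorem half_le_and_lt_two_mul_of_sphHatDist_lt {x y : X}
    (h : sphHatDist a (some x) (some y) < sphD a x / 2) :
    (1 + dist x a) / 2 ≤ 1 + dist y a ∧ 1 + dist y a < 2 * (1 + dist x a) := by
  have hx : 0 < 1 + dist x a := by positivity
  have hy : 0 < 1 + dist y a := by positivity
  obtain ⟨hupper, hlower⟩ := abs_lt.1 ((abs_sphDhat_sub_le_sphHatDist _ _).trans_lt h)
  simp only [sphDhat, sphD] at hupper hlower
  constructor
  · have : 1 / (1 + dist y a) ≤ 2 / (1 + dist x a) := by
      linarith [one_div_pos.2 hx, show 2 / (1 + dist x a) = 2 * (1 / (1 + dist x a)) by ring]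
    rw [div_le_div_iff₀ hy hx] at this
    linarith
  · have : 1 / (2 * (1 + dist x a)) < 1 / (1 + dist y a) := by
      rw [mul_comm, ← div_div]
      linarith
    exact (one_div_lt_one_div (by positivity) hy).1 this

/-- Uniform perfectness at `a` for radii `≥ 1` with constant `κ`. -/
def UniformlyPerfectAt (a : X) (κ : ℝ) : Prop :=
  1 < κ ∧ ∀ r : ℝ, 1 ≤ r → (ball a (κ * r) \ ball a r).Nonempty

theorem UniformlyPerfectAt.exists_one_add_dist_comparable {κ u : ℝ}
    (hκ : UniformlyPerfectAt a κ) (hu : 1 ≤ u) :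
    ∃ x, 1 + dist x a ≤ u ∧ u ≤ 2 * κ * (1 + dist x a) := by
  obtain ⟨hκ1, hannulus⟩ := hκ
  rcases le_or_gt u (2 * κ) with hsmall | hlarge
  · exact ⟨a, by simpa using hu, by simpa using hsmall⟩
  · have hr : 1 ≤ u / (2 * κ) := (one_le_div (by positivity)).2 hlarge.le
    obtain ⟨x, hxlt, hxge⟩ := hannulus _ hr
    rw [mem_ball, show κ * (u / (2 * κ)) = u / 2 by field_simp] at hxlt
    rw [mem_ball, not_lt, div_le_iff₀' (by positivity)] at hxge
    exact ⟨x, by linarith, by linarith⟩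

variable [MeasurableSpace X] {μ : Measure X} {q C : ℝ}

/-- The measure `μ̂_q` is doubling on `(X̂, d̂)` with constant `C`. -/
def SphDoubling (a : X) (q : ℝ) (μ : Measure X) (C : ℝ) : Prop :=
  1 < C ∧ ∀ (x : Option X) (r : ℝ), 0 < r →
    sphMeas a q μ {y : Option X | sphHatDist a x y < 2 * r} ≤
      ENNReal.ofReal C * sphMeas a q μ {y : Option X | sphHatDist a x y < r}

theorem SphDoubling.sphMeas_eight_mul_le (h : SphDoubling a q μ C) (x : Option X) {r : ℝ}
    (hr : 0 < r) :
    sphMeas a q μ {y | sphHatDist a x y < 8 * r} ≤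
      ENNReal.ofReal (C ^ 3) * sphMeas a q μ {y | sphHatDist a x y < r} := by
  rw [show 8 * r = 2 ^ 3 * r by norm_num]
  exact le_ofReal_pow_mul_of_two_mul_le (f := fun t => sphMeas a q μ {y | sphHatDist a x y < t})
    (zero_le_one.trans h.1.le) hr.le (fun t ht => h.2 x t (hr.trans_le ht)) le_rfl 3

theorem tailMass_le_sphMeas (a x : X) (q : ℝ) (μ : Measure X) :
    tailMass μ (1 + dist · a) q ((1 + dist x a) / 2) ≤
      sphMeas a q μ {y | sphHatDist a (some x) y < 4 * sphD a x} :=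
  lintegral_mono_set fun _ hy => sphHatDist_lt_four_mul_sphD hy

variable [OpensMeasurableSpace X]

theorem measurable_one_add_dist (a : X) : Measurable (1 + dist · a) :=
  (show Continuous (1 + dist · a) by fun_prop).measurable

theorem sphMeas_le_rpow_mul_measure (hq : 0 ≤ q) (a x : X) (μ : Measure X) :
    sphMeas a q μ {y | sphHatDist a (some x) y < sphD a x / 2} ≤
      ENNReal.ofReal ((((1 + dist x a) / 2) ^ q)⁻¹) *
        μ {y | 1 + dist y a < 2 * (1 + dist x a)} := by
  set shell := {y | (1 + dist x a) / 2 ≤ 1 + dist y a ∧ 1 + dist y a < 2 * (1 + dist x a)}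
  calc sphMeas a q μ {y | sphHatDist a (some x) y < sphD a x / 2}
      ≤ ∫⁻ y in shell, ENNReal.ofReal (((1 + dist y a) ^ q)⁻¹) ∂μ :=
        lintegral_mono_set fun _ hy => half_le_and_lt_two_mul_of_sphHatDist_lt hy
    _ ≤ ∫⁻ _ in shell, ENNReal.ofReal ((((1 + dist x a) / 2) ^ q)⁻¹) ∂μ := by
        refine setLIntegral_mono' (measurableSet_le_and_lt (measurable_one_add_dist a) _ _)
          fun y hy => ?_
        have := hy.1
        gcongr
    _ = ENNReal.ofReal ((((1 + dist x a) / 2) ^ q)⁻¹) * μ shell := setLIntegral_const _ _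
    _ ≤ _ := by
        gcongr
        exact fun y hy => hy.2

theorem SphDoubling.tailMass_le (h : SphDoubling a q μ C) (hq : 0 ≤ q) (x : X) :
    tailMass μ (1 + dist · a) q ((1 + dist x a) / 2) ≤
      ENNReal.ofReal (C ^ 3) * (ENNReal.ofReal ((((1 + dist x a) / 2) ^ q)⁻¹) *
        μ {y | 1 + dist y a < 2 * (1 + dist x a)}) := by
  have hdoubling := h.sphMeas_eight_mul_le (some x) (half_pos (sphD_pos a x))
  rw [show 8 * (sphD a x / 2) = 4 * sphD a x by ring] at hdoubling
  refine (tailMass_le_sphMeas a x q μ).trans (hdoubling.trans ?_)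
  gcongr
  exact sphMeas_le_rpow_mul_measure hq a x μ

theorem SphDoubling.rpow_mul_tailMass_le {κ t : ℝ} (h : SphDoubling a q μ C)
    (hκ : UniformlyPerfectAt a κ) (hq : 0 ≤ q) (ht : 2 ≤ t) :
    ENNReal.ofReal (t ^ q) * tailMass μ (1 + dist · a) q t ≤
      ENNReal.ofReal ((8 * κ) ^ q * C ^ 3) * μ {y | 1 + dist y a < t} := by
  obtain ⟨x, hxt, htx⟩ := hκ.exists_one_add_dist_comparable (u := t / 2) (by linarith)
  have : 0 < κ := zero_lt_one.trans hκ.1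
  have : 0 < C := zero_lt_one.trans h.1
  have hratio : t ^ q * (((1 + dist x a) / 2) ^ q)⁻¹ ≤ (8 * κ) ^ q := by
    rw [← div_eq_mul_inv, ← Real.div_rpow (by linarith) (by positivity)]
    gcongr
    rw [div_le_iff₀ (by positivity)]
    linarith
  calc ENNReal.ofReal (t ^ q) * tailMass μ (1 + dist · a) q t
      ≤ ENNReal.ofReal (t ^ q) * (ENNReal.ofReal (C ^ 3) *
          (ENNReal.ofReal ((((1 + dist x a) / 2) ^ q)⁻¹) *
            μ {y | 1 + dist y a < 2 * (1 + dist x a)})) := by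
        gcongr
        exact (tailMass_antitone (by linarith)).trans (h.tailMass_le hq x)
    _ = ENNReal.ofReal (t ^ q * (((1 + dist x a) / 2) ^ q)⁻¹ * C ^ 3) *
          μ {y | 1 + dist y a < 2 * (1 + dist x a)} := by
        rw [ENNReal.ofReal_mul (by positivity), ENNReal.ofReal_mul (by positivity)]
        ring
    _ ≤ ENNReal.ofReal ((8 * κ) ^ q * C ^ 3) * μ {y | 1 + dist y a < t} := by
        gcongr
        linarith

theorem statement15_general {κ : ℝ} (hκ : UniformlyPerfectAt a κ) (hq : 0 < q)
    (hC : SphDoubling a q μ C) :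
    ∃ s Cs : ℝ, 0 < s ∧ s < q ∧ 0 < Cs ∧
      ∀ r R : ℝ, 1 ≤ r → r ≤ R →
        ENNReal.ofReal (Cs * (r / R) ^ s) * μ (ball a R) ≤ μ (ball a r) := by
  have : 0 < κ := zero_lt_one.trans hκ.1
  have : 0 < C := zero_lt_one.trans hC.1
  obtain ⟨s, K, hs, hsq, hK, hgrowth⟩ := exists_measure_sublevel_le_rpow
    (measurable_one_add_dist a) hq (by positivity) two_pos
    fun t ht => hC.rpow_mul_tailMass_le hκ hq.le ht
  refine ⟨s, K⁻¹, hs, hsq, by positivity, fun r R hr hrR => ?_⟩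
  have : 0 < r := by linarith
  have : 0 < R := by linarith
  have hshift : (r / R) * ((1 + R) / (1 + r)) ≤ 1 := by
    rw [div_mul_div_comm, div_le_one (by positivity)]
    linarith
  have hcoeff : K⁻¹ * (r / R) ^ s * (K * ((1 + R) / (1 + r)) ^ s) ≤ 1 := by
    rw [mul_mul_mul_comm, inv_mul_cancel₀ hK.ne', one_mul,
      ← Real.mul_rpow (by positivity) (by positivity)]
    exact Real.rpow_le_one (by positivity) hshift hs.le
  rw [ball_eq_setOf_one_add_dist_lt a r, ball_eq_setOf_one_add_dist_lt a R]
  calc _ ≤ ENNReal.ofReal (K⁻¹ * (r / R) ^ s) *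
          (ENNReal.ofReal (K * ((1 + R) / (1 + r)) ^ s) * μ {y | 1 + dist y a < 1 + r}) := by
        gcongr
        exact hgrowth (1 + r) (1 + R) (by linarith) (by linarith)
    _ ≤ 1 * μ {y | 1 + dist y a < 1 + r} := by
        rw [← mul_assoc, ← ENNReal.ofReal_mul (by positivity)]
        gcongr
        exact ENNReal.ofReal_le_one.2 hcoeff
    _ = _ := one_mul _

end Sphericalization

/-- If `X` is uniformly perfect at `a` for radii `≥ 1` with
constant `κ`, `μ` is doubling, and for some `q > 0` the measure `μ̂_q` is doubling on
`(X̂, d̂)`, then there exist `0 < s < q` and `C_s > 0` such that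
`μ(B(a,r))/μ(B(a,R)) ≥ C_s (r/R)^s` whenever `1 ≤ r ≤ R < ∞`. -/
theorem statement15 [MetricSpace X] [MeasurableSpace X] [BorelSpace X]
    (hX : ¬ Bornology.IsBounded (Set.univ : Set X)) (a : X) (μ : Measure X)
    (hpos : ∀ (x : X) (r : ℝ), 0 < r → 0 < μ (Metric.ball x r))
    (hfin : ∀ (x : X) (r : ℝ), 0 < r → μ (Metric.ball x r) < ⊤)
    (κ : ℝ) (hκ : 1 < κ)
    (hup : ∀ r : ℝ, 1 ≤ r → (Metric.ball a (κ * r) \ Metric.ball a r).Nonempty)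
    (Cμ : ℝ) (hCμ : 1 < Cμ)
    (hdoub : ∀ (x : X) (r : ℝ), 0 < r →
      μ (Metric.ball x (2 * r)) ≤ ENNReal.ofReal Cμ * μ (Metric.ball x r))
    (q : ℝ) (hq : 0 < q)
    (Chat : ℝ) (hChat : 1 < Chat)
    (hdoubhat : ∀ (x : Option X) (r : ℝ), 0 < r →
      sphMeas a q μ {y : Option X | sphHatDist a x y < 2 * r} ≤
        ENNReal.ofReal Chat * sphMeas a q μ {y : Option X | sphHatDist a x y < r}) :
    ∃ s Cs : ℝ, 0 < s ∧ s < q ∧ 0 < Cs ∧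
      ∀ r R : ℝ, 1 ≤ r → r ≤ R →
        ENNReal.ofReal (Cs * (r / R) ^ s) * μ (Metric.ball a R) ≤ μ (Metric.ball a r) :=
  statement15_general ⟨hκ, hup⟩ hq ⟨hChat, hdoubhat⟩
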